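/- The cubic R³ − R² − R − 1 = 0 has exactly one positive real root, namely R₀ = 1/3 + (1/3)·∛(19 + 3√33) + (1/3)·∛(19 − 3√33) (R₀ ≈ 1.839), and for all real x, y with 0 < x < R₀ and 0 < y < R₀ one has 2β(x,y) < α(x,y) < 1. -/

import Mathlib

/-- The auxiliary function `α(x,y) = -d₁(x,y)/d₀(x,y)` of the BDF3 analysis. -/
noncomputable def alphaF (x y : ℝ) : ℝ :=
  x*(x^2*y^2 + 4*x*y^2 + 3*y^2 + 2*x*y + 3*y + 1) /
    ((y + 1)*(3*x^2*y + 4*x*y + 2*x + y + 1))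

/-- The auxiliary function `β(x,y) = d₂(x,y)/d₀(x,y)` of the BDF3 analysis. -/
noncomputable def betaF (x y : ℝ) : ℝ :=
  x*(x + 1)^2*y^2 / ((y + 1)*(3*x^2*y + 4*x*y + 2*x + y + 1))

/-- Remark 3.3: the cubic `R³ - R² - R - 1 = 0` has exactly one positive real root, namely
`R₀ = 1/3 + (1/3)∛(19+3√33) + (1/3)∛(19-3√33) ≈ 1.839`, and for all `0 < x < R₀`,
`0 < y < R₀` one has `2β(x,y) < α(x,y) < 1`. -/
theorem cubic_root_and_two_beta_lt_alpha (R0 : ℝ)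
    (hR0 : R0 = 1/3 + (1/3)*(19 + 3*Real.sqrt 33) ^ ((1:ℝ)/3)
        + (1/3)*(19 - 3*Real.sqrt 33) ^ ((1:ℝ)/3)) :
    (0 < R0 ∧ R0^3 - R0^2 - R0 - 1 = 0 ∧
      ∀ x : ℝ, 0 < x → x^3 - x^2 - x - 1 = 0 → x = R0) ∧
    (∀ x y : ℝ, 0 < x → x < R0 → 0 < y → y < R0 →
      2*betaF x y < alphaF x y ∧ alphaF x y < 1) := by
  have hs : Real.sqrt 33 ^ 2 = 33 := Real.sq_sqrt (by norm_num)
  have hs0 : 0 ≤ Real.sqrt 33 := Real.sqrt_nonneg 33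
  have hs1 : Real.sqrt 33 < 6 := by nlinarith
  have hA : 0 < 19 + 3*Real.sqrt 33 := by linarith
  have hB : 0 < 19 - 3*Real.sqrt 33 := by linarith
  have ha0 := Real.rpow_pos_of_pos hA ((1:ℝ)/3)
  have hb0 := Real.rpow_pos_of_pos hB ((1:ℝ)/3)
  have ha3 : ((19 + 3*Real.sqrt 33) ^ ((1:ℝ)/3))^3 = 19 + 3*Real.sqrt 33 := by
    rw [← Real.rpow_natCast, ← Real.rpow_mul hA.le]; norm_num
  have hb3 : ((19 - 3*Real.sqrt 33) ^ ((1:ℝ)/3))^3 = 19 - 3*Real.sqrt 33 := by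
    rw [← Real.rpow_natCast, ← Real.rpow_mul hB.le]; norm_num
  have hab : (19 + 3*Real.sqrt 33) ^ ((1:ℝ)/3) * (19 - 3*Real.sqrt 33) ^ ((1:ℝ)/3) = 4 := by
    rw [← Real.mul_rpow hA.le hB.le]
    have : (19 + 3*Real.sqrt 33) * (19 - 3*Real.sqrt 33) = (4:ℝ)^(3:ℝ) := by
      norm_num; nlinarith
    rw [this, ← Real.rpow_mul (by norm_num)]; norm_num
  generalize (19 + 3*Real.sqrt 33) ^ ((1:ℝ)/3) = a at *
  generalize (19 - 3*Real.sqrt 33) ^ ((1:ℝ)/3) = b at *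
  have hR : 0 < R0 := by rw [hR0]; positivity
  have hc : R0^3 - R0^2 - R0 - 1 = 0 := by
    rw [hR0]
    linear_combination (1/27)*ha3 + (1/27)*hb3 + (1/9)*(a+b)*hab
  have hq : 0 < R0^2 - R0 - 1 := by
    by_contra h
    nlinarith [mul_nonneg hR.le (by linarith : 0 ≤ -(R0^2 - R0 - 1))]
  have hR1 : 1 < R0 := by nlinarith
  refine ⟨⟨hR, hc, ?_⟩, ?_⟩
  · intro x hx h
    have h1 : (x - R0) * (x^2 + x*(R0-1) + (R0^2-R0-1)) = 0 := by
      linear_combination h - hc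
    have h2 : 0 < x^2 + x*(R0-1) + (R0^2-R0-1) := by
      have := mul_pos hx (sub_pos.2 hR1)
      positivity
    rcases mul_eq_zero.1 h1 with h3 | h3
    · linarith
    · linarith
  · intro x y hx hxR hy hyR
    have hg : 0 < 1 + (2+R0)*y - (R0^2-1)*y^2 := by
      have e : 1 + (2+R0)*y - (R0^2-1)*y^2 = (R0-y)*((R0^2-R0-1) + (R0^2-1)*y) := by
        linear_combination (-1 - y) * hc
      rw [e]
      have h1 : 0 < R0^2 - 1 := by nlinarith
      have h2 := sub_pos.2 hyR
      positivity
    have hf : 0 < 1 + (2+x)*y - (x^2-1)*y^2 := by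
      have e : R0 * (1 + (2+x)*y - (x^2-1)*y^2) = (R0-x)*(1+2*y+y^2)
          + x*(1 + (2+R0)*y - (R0^2-1)*y^2) + R0*y^2*x*(R0-x) := by ring
      have h2 := sub_pos.2 hxR
      have : 0 < R0 * (1 + (2+x)*y - (x^2-1)*y^2) := by rw [e]; positivity
      exact pos_of_mul_pos_right this hR.le
    have hD : 0 < (y + 1)*(3*x^2*y + 4*x*y + 2*x + y + 1) := by positivity
    unfold alphaF betaF
    constructor
    · rw [← mul_div_assoc]
      apply div_lt_div_of_pos_right _ hD
      have := mul_pos hx hf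
      have h3 : 0 < x*(x*y+y) := by positivity
      linarith
    · rw [div_lt_one hD]
      have := mul_pos (by linarith : 0 < x+1) hf
      linarith
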